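/- (Monotonicity of the family of storage functions.) For all γ₁, γ₂ with −h ≤ γ₁ ≤ γ₂ ≤ h, one has S_{γ₁}(φ) ≤ S_{γ₂}(φ) for every φ ∈ ℝ. -/

import Mathlib

/-- The family of storage functions `S_γ` for the backlash inductor. -/
noncomputable def Sfam (L h γ φ : ℝ) : ℝ :=
  if (h - γ) / 2 < φ then (1 / (2 * L)) * ((φ + γ) ^ 2 - ((h + γ) / 2) ^ 2)
  else if φ < -((h - γ) / 2) then (1 / (2 * L)) * ((φ - γ) ^ 2 - ((h + γ) / 2) ^ 2)
  else 0

theorem stmt2 (L h : ℝ) (hL : 0 < L) (hh : 0 ≤ h) :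
    ∀ γ₁ γ₂ : ℝ, -h ≤ γ₁ → γ₁ ≤ γ₂ → γ₂ ≤ h →
      ∀ φ : ℝ, Sfam L h γ₁ φ ≤ Sfam L h γ₂ φ := by
  intro a b ha hab hb φ
  have hc : 0 < 1 / (2 * L) := by positivity
  unfold Sfam
  split_ifs with h1 h2 h3 h4 h5 h6 h7
  all_goals first
    | exact le_refl _
    | (exfalso; linarith)
    | (refine mul_le_mul_of_nonneg_left ?_ hc.le
       nlinarith [mul_nonneg (sub_nonneg.2 hab) (show 0 ≤ (2*φ+a+b) - (2*h+a+b)/4 by linarith)])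
    | (refine mul_le_mul_of_nonneg_left ?_ hc.le
       nlinarith [mul_nonneg (sub_nonneg.2 hab) (show 0 ≤ (-2*φ+a+b) - (2*h+a+b)/4 by linarith)])
    | (refine mul_nonneg hc.le ?_
       nlinarith [mul_nonneg (show 0 ≤ φ + b - (h+b)/2 by linarith) (show 0 ≤ φ + b + (h+b)/2 by linarith)])
    | (refine mul_nonneg hc.le ?_
       nlinarith [mul_nonneg (show 0 ≤ -φ + b - (h+b)/2 by linarith) (show 0 ≤ -φ + b + (h+b)/2 by linarith)])
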